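/- Let A,B,C,D,p,q be real numbers with AD−BC=1 and B≠0, and let 0 ≤ α < 1. For every Schwartz function f on ℝ, the Pitt inequality for the SAFT holds: |B|^α ∫_ℝ |ω|^{−α} |f̂_Λ(ω)|² dω ≤ C_α ∫_ℝ |x|^α |f(x)|² dx, where C_α = π^α · [ Γ((1−α)/4) / Γ((1+α)/4) ]² and Γ denotes the Euler gamma function. -/

import Mathlib

/-!
Writing `(π ‖ξ‖²) ^ (-a)` as a superposition of Gaussians `exp (-π t ‖ξ‖²)`, whose Fourier
transforms are heat kernels, bounds `∫ (π ‖ξ‖²) ^ (-a) ‖𝓕 g ξ‖²` by the quadratic form of the Riesz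
kernel `R a` at `‖g‖`. The Schur test with weight `R b` bounds this form by
`∫ (R (a + b) / R b) ‖g‖²`, because the semigroup laws of the heat kernel and of the
Riemann–Liouville kernel give `R a ⋆ R b = R (a + b)`. In dimension `d`, the choice of `b` with
`a + 2 b = d / 2` makes `R (a + b) / R b` equal to `(Γ(b) / Γ(a + b))² (π ‖x‖²) ^ a`, which is
Pitt's inequality with its sharp constant for `a = α / 2`; the case `α = 0` is the limit `t → 0` of
the Gaussian estimate. The SAFT of `f` is, up to a unimodular factor and a dilation by `2 π B`, the
Fourier transform of `f` times a unimodular chirp, and the dilation accounts for the power of `|B|`.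
-/

open MeasureTheory Real Set

/-- The special affine Fourier transform (SAFT) with parameter matrix
`[[A, B], [C, D]]` and offset `(p, q)` (the kernel does not involve `C`). -/
noncomputable def SAFT (A B D p q : ℝ) (f : ℝ → ℂ) (ω : ℝ) : ℂ :=
  (Real.sqrt (2 * Real.pi * |B|) : ℂ)⁻¹ *
    ∫ x : ℝ, f x * Complex.exp ((Complex.I / (2 * (B : ℂ))) *
      ((A : ℂ) * (x : ℂ) ^ 2 + 2 * (x : ℂ) * ((p : ℂ) - (ω : ℂ))
        - 2 * (ω : ℂ) * ((D : ℂ) * (p : ℂ) - (B : ℂ) * (q : ℂ))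
        + (D : ℂ) * (ω : ℂ) ^ 2))

open Filter ProbabilityTheory Function
open scoped ENNReal FourierTransform InnerProductSpace Topology SchwartzMap

section RiemannLiouville

/-- The Riemann–Liouville kernel `t ↦ t₊ ^ (a - 1) / Γ(a)`, whose Laplace transform is
`c ↦ c ^ (-a)`. -/
noncomputable def riemannLiouvilleKernel (a t : ℝ) : ℝ≥0∞ :=
  if 0 < t then ENNReal.ofReal (t ^ (a - 1) / Gamma a) else 0

lemma riemannLiouvilleKernel_of_pos {t : ℝ} (ht : 0 < t) (a : ℝ) :
    riemannLiouvilleKernel a t = ENNReal.ofReal (t ^ (a - 1) / Gamma a) := if_pos ht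

lemma riemannLiouvilleKernel_of_nonpos {t : ℝ} (ht : t ≤ 0) (a : ℝ) :
    riemannLiouvilleKernel a t = 0 := if_neg ht.not_gt

lemma riemannLiouvilleKernel_ne_top (a t : ℝ) : riemannLiouvilleKernel a t ≠ ∞ := by
  unfold riemannLiouvilleKernel
  split_ifs <;> finiteness

@[fun_prop]
lemma measurable_riemannLiouvilleKernel (a : ℝ) : Measurable (riemannLiouvilleKernel a) :=
  Measurable.ite measurableSet_Ioi (by fun_prop) measurable_const

lemma lintegral_riemannLiouvilleKernel_mul (a : ℝ) (F : ℝ → ℝ≥0∞) :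
    ∫⁻ t, riemannLiouvilleKernel a t * F t =
      ∫⁻ t in Ioi 0, ENNReal.ofReal (t ^ (a - 1) / Gamma a) * F t := by
  rw [← lintegral_indicator measurableSet_Ioi]
  congr with t
  rcases lt_or_ge 0 t with ht | ht
  · simp [riemannLiouvilleKernel_of_pos ht, ht]
  · simp [riemannLiouvilleKernel_of_nonpos ht, ht.not_gt]

lemma riemannLiouvilleKernel_mul_left {c : ℝ} (hc : 0 < c) (a t : ℝ) :
    riemannLiouvilleKernel a (c * t) =
      ENNReal.ofReal (c ^ (a - 1)) * riemannLiouvilleKernel a t := by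
  rcases lt_or_ge 0 t with ht | ht
  · rw [riemannLiouvilleKernel_of_pos (mul_pos hc ht), riemannLiouvilleKernel_of_pos ht,
      ← ENNReal.ofReal_mul (by positivity), mul_rpow hc.le ht.le, mul_div_assoc]
  · rw [riemannLiouvilleKernel_of_nonpos (mul_nonpos_of_nonneg_of_nonpos hc.le ht),
      riemannLiouvilleKernel_of_nonpos ht, mul_zero]

lemma lintegral_riemannLiouvilleKernel_mul_exp_neg {a c : ℝ} (ha : 0 < a) (hc : 0 < c) :
    ∫⁻ t, riemannLiouvilleKernel a t * ENNReal.ofReal (exp (-(c * t))) =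
      ENNReal.ofReal (c ^ (-a)) := by
  have gamma_density : ∀ᵐ t : ℝ, riemannLiouvilleKernel a t * ENNReal.ofReal (exp (-(c * t))) =
      ENNReal.ofReal (c ^ (-a)) * gammaPDF a c t := by
    filter_upwards [volume.ae_ne 0] with t ht0
    rcases ht0.lt_or_gt with ht | ht
    · rw [riemannLiouvilleKernel_of_nonpos ht.le, gammaPDF_of_neg ht, zero_mul, mul_zero]
    · have := Gamma_pos_of_pos ha
      rw [riemannLiouvilleKernel_of_pos ht, gammaPDF_of_nonneg ht.le,
        ← ENNReal.ofReal_mul (by positivity), ← ENNReal.ofReal_mul (by positivity),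
        rpow_neg hc.le]
      field_simp
  rw [lintegral_congr_ae gamma_density, lintegral_const_mul' _ _ ENNReal.ofReal_ne_top,
    lintegral_gammaPDF_eq_one ha hc, mul_one]

lemma lintegral_eq_ofReal_mul_lintegral_comp_mul_left {c : ℝ} (hc : 0 < c) (F : ℝ → ℝ≥0∞) :
    ∫⁻ t, F t = ENNReal.ofReal c * ∫⁻ t, F (c * t) := by
  have emb : MeasurableEmbedding (c * ·) := (Homeomorph.mulLeft₀ c hc.ne').measurableEmbedding
  nth_rw 1 [← smul_map_volume_mul_left hc.ne']
  rw [lintegral_smul_measure, emb.lintegral_map, abs_of_pos hc, smul_eq_mul]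

lemma riemannLiouvilleKernel_mul_one_sub {a b : ℝ} (ha : 0 < a) (hb : 0 < b) (u : ℝ) :
    riemannLiouvilleKernel a u * riemannLiouvilleKernel b (1 - u) =
      ENNReal.ofReal (1 / Gamma (a + b)) * betaPDF a b u := by
  have := Gamma_pos_of_pos ha
  have := Gamma_pos_of_pos hb
  have := Gamma_pos_of_pos (add_pos ha hb)
  rcases le_or_gt u 0 with hu | hu
  · rw [riemannLiouvilleKernel_of_nonpos hu, betaPDF_eq_zero_of_nonpos hu, zero_mul, mul_zero]
  rcases le_or_gt 1 u with hu1 | hu1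
  · rw [riemannLiouvilleKernel_of_nonpos (sub_nonpos.2 hu1), betaPDF_eq_zero_of_one_le hu1,
      mul_zero, mul_zero]
  have hu1' : 0 < 1 - u := sub_pos.2 hu1
  rw [riemannLiouvilleKernel_of_pos hu, riemannLiouvilleKernel_of_pos hu1',
    betaPDF_of_pos_lt_one hu hu1, ← ENNReal.ofReal_mul (by positivity),
    ← ENNReal.ofReal_mul (by positivity), beta]
  field_simp

lemma lintegral_riemannLiouvilleKernel_mul_sub {a b : ℝ} (ha : 0 < a) (hb : 0 < b) (r : ℝ) :
    ∫⁻ t, riemannLiouvilleKernel a t * riemannLiouvilleKernel b (r - t) =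
      riemannLiouvilleKernel (a + b) r := by
  rcases le_or_gt r 0 with hr | hr
  · rw [riemannLiouvilleKernel_of_nonpos hr, lintegral_eq_zero_iff (by fun_prop)]
    filter_upwards with t
    rcases le_or_gt t 0 with ht | ht
    · simp [riemannLiouvilleKernel_of_nonpos ht]
    · simp [riemannLiouvilleKernel_of_nonpos (show r - t ≤ 0 by linarith)]
  have := Gamma_pos_of_pos (add_pos ha hb)
  calc ∫⁻ t, riemannLiouvilleKernel a t * riemannLiouvilleKernel b (r - t)
      = ENNReal.ofReal r *
          ∫⁻ u, riemannLiouvilleKernel a (r * u) * riemannLiouvilleKernel b (r * (1 - u)) := by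
        rw [lintegral_eq_ofReal_mul_lintegral_comp_mul_left hr]
        simp only [mul_sub, mul_one]
    _ = ENNReal.ofReal r * ∫⁻ u, ENNReal.ofReal (r ^ (a - 1)) * ENNReal.ofReal (r ^ (b - 1)) *
          (ENNReal.ofReal (1 / Gamma (a + b)) * betaPDF a b u) := by
        simp_rw [riemannLiouvilleKernel_mul_left hr, ← riemannLiouvilleKernel_mul_one_sub ha hb,
          mul_mul_mul_comm]
    _ = ENNReal.ofReal (r ^ (a - 1) * r ^ (b - 1) * r / Gamma (a + b)) := by
        rw [lintegral_const_mul' _ _ (by finiteness), lintegral_const_mul' _ _ (by finiteness),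
          lintegral_betaPDF_eq_one ha hb, mul_one, ← ENNReal.ofReal_mul (by positivity),
          ← ENNReal.ofReal_mul (by positivity), ← ENNReal.ofReal_mul hr.le]
        ring_nf
    _ = riemannLiouvilleKernel (a + b) r := by
        rw [riemannLiouvilleKernel_of_pos hr, ← rpow_add hr, ← rpow_add_one hr.ne']
        ring_nf

lemma lintegral_lintegral_riemannLiouvilleKernel_mul_comp_add {a b : ℝ} (ha : 0 < a) (hb : 0 < b)
    {F : ℝ → ℝ≥0∞} (hF : Measurable F) :
    ∫⁻ t, ∫⁻ s, riemannLiouvilleKernel a t * riemannLiouvilleKernel b s * F (t + s) =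
      ∫⁻ r, riemannLiouvilleKernel (a + b) r * F r := by
  calc ∫⁻ t, ∫⁻ s, riemannLiouvilleKernel a t * riemannLiouvilleKernel b s * F (t + s)
      = ∫⁻ t, ∫⁻ r, riemannLiouvilleKernel a t * riemannLiouvilleKernel b (r - t) * F r := by
        congr with t
        rw [← lintegral_sub_right_eq_self _ t]
        simp only [add_sub_cancel]
    _ = ∫⁻ r, ∫⁻ t, riemannLiouvilleKernel a t * riemannLiouvilleKernel b (r - t) * F r :=
        lintegral_lintegral_swap (by fun_prop)
    _ = ∫⁻ r, riemannLiouvilleKernel (a + b) r * F r := by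
        congr with r
        rw [lintegral_mul_const _ (by fun_prop), lintegral_riemannLiouvilleKernel_mul_sub ha hb]

end RiemannLiouville

section HeatKernel

variable {V : Type*} [NormedAddCommGroup V] [InnerProductSpace ℝ V]

/-- The heat kernel on a Euclidean space with time normalised so that it is the Fourier transform
of `ξ ↦ exp (-π t ‖ξ‖²)`. -/
noncomputable def heatKernel (t : ℝ) (x : V) : ℝ :=
  t ^ (-(Module.finrank ℝ V / 2 : ℝ)) * exp (-(π * ‖x‖ ^ 2 / t))

lemma heatKernel_nonneg {t : ℝ} (ht : 0 ≤ t) (x : V) : 0 ≤ heatKernel t x := by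
  unfold heatKernel
  positivity

lemma heatKernel_neg (t : ℝ) (x : V) : heatKernel t (-x) = heatKernel t x := by
  simp only [heatKernel, norm_neg]

lemma heatKernel_sub_mul_heatKernel {t s : ℝ} (ht : 0 < t) (hs : 0 < s) (x y : V) :
    heatKernel t (x - y) * heatKernel s y =
      heatKernel (t + s) x * heatKernel (t * s / (t + s)) (y - (s / (t + s)) • x) := by
  have complete_square : π * ‖x - y‖ ^ 2 / t + π * ‖y‖ ^ 2 / s = π * ‖x‖ ^ 2 / (t + s) +
      π * ‖y - (s / (t + s)) • x‖ ^ 2 / (t * s / (t + s)) := by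
    rw [norm_sub_sq_real, norm_sub_sq_real, norm_smul, mul_pow, norm_eq_abs, sq_abs,
      real_inner_smul_right, real_inner_comm]
    field_simp
    ring
  have hts : t * s = (t + s) * (t * s / (t + s)) := by field_simp
  simp only [heatKernel]
  rw [mul_mul_mul_comm, ← exp_add, ← mul_rpow ht.le hs.le, mul_mul_mul_comm, ← exp_add,
    ← mul_rpow (by positivity) (by positivity), ← hts, ← neg_add, ← neg_add, complete_square]

variable [MeasurableSpace V] [BorelSpace V]

@[fun_prop]
lemma measurable_heatKernel_comp {X : Type*} [MeasurableSpace X] {τ : X → ℝ} {v : X → V}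
    (hτ : Measurable τ) (hv : Measurable v) : Measurable fun z ↦ heatKernel (τ z) (v z) := by
  unfold heatKernel
  fun_prop

variable [FiniteDimensional ℝ V]

lemma lintegral_heatKernel {t : ℝ} (ht : 0 < t) :
    ∫⁻ x : V, ENNReal.ofReal (heatKernel t x) = 1 := by
  have total_mass : ∫ x : V, heatKernel t x = 1 := by
    have := GaussianFourier.integral_rexp_neg_mul_sq_norm (V := V) (div_pos pi_pos ht)
    simp only [heatKernel, integral_const_mul, ← neg_mul, mul_div_right_comm] at this ⊢
    rw [this, div_div_cancel₀ pi_ne_zero, ← rpow_add ht, neg_add_cancel, rpow_zero]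
  rw [← ofReal_integral_eq_lintegral_ofReal
    (.of_integral_ne_zero (total_mass.trans_ne one_ne_zero))
    (.of_forall (heatKernel_nonneg ht.le)), total_mass, ENNReal.ofReal_one]

lemma lintegral_heatKernel_sub_mul_heatKernel {t s : ℝ} (ht : 0 < t) (hs : 0 < s) (x : V) :
    ∫⁻ y, ENNReal.ofReal (heatKernel t (x - y)) * ENNReal.ofReal (heatKernel s y) =
      ENNReal.ofReal (heatKernel (t + s) x) := by
  simp_rw [← ENNReal.ofReal_mul (heatKernel_nonneg ht.le _), heatKernel_sub_mul_heatKernel ht hs,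
    ENNReal.ofReal_mul (heatKernel_nonneg (add_pos ht hs).le x)]
  rw [lintegral_const_mul' _ _ ENNReal.ofReal_ne_top,
    lintegral_sub_right_eq_self fun y ↦ ENNReal.ofReal (heatKernel (t * s / (t + s)) y),
    lintegral_heatKernel (by positivity), mul_one]

end HeatKernel

section RieszKernel

variable {V : Type*} [NormedAddCommGroup V] [InnerProductSpace ℝ V]

/-- The Riesz kernel of order `2 * a`, subordinated to the heat kernel; formally it is the Fourier
transform of `ξ ↦ (π ‖ξ‖²) ^ (-a)`. -/
noncomputable def rieszKernel (a : ℝ) (x : V) : ℝ≥0∞ :=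
  ∫⁻ t, riemannLiouvilleKernel a t * ENNReal.ofReal (heatKernel t x)

lemma rieszKernel_neg (a : ℝ) (x : V) : rieszKernel a (-x) = rieszKernel a x := by
  simp only [rieszKernel, heatKernel_neg]

lemma integral_rpow_neg_sub_one_mul_exp_neg_div_Ioi {b c : ℝ} (hb : 0 < b) (hc : 0 < c) :
    ∫ t in Ioi 0, t ^ (-b - 1) * exp (-(c / t)) = Gamma b * c ^ (-b) := by
  rw [rpow_neg hc.le, ← inv_rpow hc.le, ← one_div, mul_comm,
    ← integral_rpow_mul_exp_neg_mul_Ioi hb hc,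
    ← integral_comp_rpow_Ioi _ (show (-1 : ℝ) ≠ 0 by norm_num)]
  refine setIntegral_congr_fun measurableSet_Ioi fun t (ht : 0 < t) ↦ ?_
  simp only [abs_neg, abs_one, one_mul, smul_eq_mul]
  rw [← rpow_mul ht.le, ← mul_assoc, ← rpow_add ht, rpow_neg_one, div_inv_eq_mul]
  ring_nf

lemma rieszKernel_eq {a : ℝ} (ha : 0 < a) (had : a < Module.finrank ℝ V / 2) {x : V}
    (hx : x ≠ 0) :
    rieszKernel a x = ENNReal.ofReal (Gamma (Module.finrank ℝ V / 2 - a) / Gamma a *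
      (π * ‖x‖ ^ 2) ^ (a - Module.finrank ℝ V / 2)) := by
  set b : ℝ := Module.finrank ℝ V / 2 - a with hb_def
  have hb : 0 < b := sub_pos.2 had
  have := Gamma_pos_of_pos ha
  have := Gamma_pos_of_pos hb
  have integral_eq : ∫ t in Ioi 0, t ^ (-b - 1) * exp (-(π * ‖x‖ ^ 2 / t)) / Gamma a =
      Gamma b / Gamma a * (π * ‖x‖ ^ 2) ^ (-b) := by
    rw [integral_div, integral_rpow_neg_sub_one_mul_exp_neg_div_Ioi hb (by positivity)]
    ring
  rw [← neg_sub (Module.finrank ℝ V / 2 : ℝ), ← hb_def, ← integral_eq,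
    ofReal_integral_eq_lintegral_ofReal
      (.of_integral_ne_zero (by rw [integral_eq]; positivity))
      ((ae_restrict_mem measurableSet_Ioi).mono fun t (ht : 0 < t) ↦ by positivity),
    rieszKernel, lintegral_riemannLiouvilleKernel_mul]
  refine setLIntegral_congr_fun measurableSet_Ioi fun t (ht : 0 < t) ↦ ?_
  simp only [heatKernel]
  rw [← ENNReal.ofReal_mul (by positivity), ← mul_assoc, div_mul_eq_mul_div, ← rpow_add ht]
  congr 1
  rw [hb_def]
  ring_nf

lemma rieszKernel_add_div_rieszKernel {a b : ℝ} (ha : 0 < a) (hb : 0 < b)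
    (hab : a + 2 * b = Module.finrank ℝ V / 2) {x : V} (hx : x ≠ 0) :
    rieszKernel (a + b) x / rieszKernel b x =
      ENNReal.ofReal ((Gamma b / Gamma (a + b)) ^ 2 * (π * ‖x‖ ^ 2) ^ a) := by
  have := Gamma_pos_of_pos hb
  have := Gamma_pos_of_pos (add_pos ha hb)
  have hc : 0 < π * ‖x‖ ^ 2 := by positivity
  rw [rieszKernel_eq (add_pos ha hb) (by linarith) hx, rieszKernel_eq hb (by linarith) hx,
    show (Module.finrank ℝ V / 2 - (a + b) : ℝ) = b by linarith,
    show (Module.finrank ℝ V / 2 - b : ℝ) = a + b by linarith,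
    ← ENNReal.ofReal_div_of_pos (by positivity),
    show (a + b - Module.finrank ℝ V / 2 : ℝ) = a + (b - Module.finrank ℝ V / 2) by ring,
    rpow_add hc]
  congr 1
  field_simp

lemma rieszKernel_ne_zero_and_ne_top {b : ℝ} (hb : 0 < b) (hbd : b < Module.finrank ℝ V / 2)
    {x : V} (hx : x ≠ 0) : rieszKernel b x ≠ 0 ∧ rieszKernel b x ≠ ∞ := by
  have := Gamma_pos_of_pos hb
  have := Gamma_pos_of_pos (sub_pos.2 hbd)
  rw [rieszKernel_eq hb hbd hx]
  exact ⟨(ENNReal.ofReal_pos.2 (by positivity)).ne', ENNReal.ofReal_ne_top⟩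

variable [MeasurableSpace V] [BorelSpace V]

@[fun_prop]
lemma measurable_rieszKernel (a : ℝ) : Measurable (rieszKernel a : V → ℝ≥0∞) := by
  unfold rieszKernel
  exact Measurable.lintegral_prod_right (by fun_prop)

variable [FiniteDimensional ℝ V]

lemma lintegral_rieszKernel_sub_mul_rieszKernel {a b : ℝ} (ha : 0 < a) (hb : 0 < b) (x : V) :
    ∫⁻ y, rieszKernel a (x - y) * rieszKernel b y = rieszKernel (a + b) x := by
  calc ∫⁻ y, rieszKernel a (x - y) * rieszKernel b y
      = ∫⁻ y, ∫⁻ z : ℝ × ℝ,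
          (riemannLiouvilleKernel a z.1 * ENNReal.ofReal (heatKernel z.1 (x - y))) *
            (riemannLiouvilleKernel b z.2 * ENNReal.ofReal (heatKernel z.2 y)) := by
        congr with y
        exact (lintegral_prod_mul (by fun_prop) (by fun_prop)).symm
    _ = ∫⁻ z : ℝ × ℝ, ∫⁻ y,
          (riemannLiouvilleKernel a z.1 * ENNReal.ofReal (heatKernel z.1 (x - y))) *
            (riemannLiouvilleKernel b z.2 * ENNReal.ofReal (heatKernel z.2 y)) :=
        lintegral_lintegral_swap (by fun_prop)
    _ = ∫⁻ z : ℝ × ℝ, riemannLiouvilleKernel a z.1 * riemannLiouvilleKernel b z.2 *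
          ENNReal.ofReal (heatKernel (z.1 + z.2) x) := by
        congr with ⟨t, s⟩
        rcases le_or_gt t 0 with ht | ht
        · simp [riemannLiouvilleKernel_of_nonpos ht]
        rcases le_or_gt s 0 with hs | hs
        · simp [riemannLiouvilleKernel_of_nonpos hs]
        simp_rw [mul_mul_mul_comm]
        rw [lintegral_const_mul, lintegral_heatKernel_sub_mul_heatKernel ht hs]
        fun_prop
    _ = ∫⁻ t, ∫⁻ s, riemannLiouvilleKernel a t * riemannLiouvilleKernel b s *
          ENNReal.ofReal (heatKernel (t + s) x) := lintegral_prod _ (by fun_prop)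
    _ = rieszKernel (a + b) x :=
        lintegral_lintegral_riemannLiouvilleKernel_mul_comp_add ha hb
          (F := fun r ↦ ENNReal.ofReal (heatKernel r x)) (by fun_prop)

lemma lintegral_riemannLiouvilleKernel_mul_lintegral_heatKernel_sub (a : ℝ) {u : V → ℝ≥0∞}
    (hu : AEMeasurable u) :
    ∫⁻ t, riemannLiouvilleKernel a t *
        ∫⁻ x, ∫⁻ y, u x * u y * ENNReal.ofReal (heatKernel t (x - y)) =
      ∫⁻ x, ∫⁻ y, u x * u y * rieszKernel a (x - y) := by
  have u_meas : AEMeasurable (fun z : V × V ↦ u z.1 * u z.2) (volume.prod volume) :=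
    hu.comp_fst.mul hu.comp_snd
  have joint_meas : AEMeasurable (fun r : ℝ × V × V ↦ riemannLiouvilleKernel a r.1 *
      (u r.2.1 * u r.2.2 * ENNReal.ofReal (heatKernel r.1 (r.2.1 - r.2.2))))
      (volume.prod (volume.prod volume)) :=
    AEMeasurable.mul (by fun_prop) (u_meas.comp_snd.mul (by fun_prop))
  calc ∫⁻ t, riemannLiouvilleKernel a t *
        ∫⁻ x, ∫⁻ y, u x * u y * ENNReal.ofReal (heatKernel t (x - y))
      = ∫⁻ t, ∫⁻ z : V × V, riemannLiouvilleKernel a t *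
          (u z.1 * u z.2 * ENNReal.ofReal (heatKernel t (z.1 - z.2))) ∂(volume.prod volume) := by
        congr with t
        rw [lintegral_const_mul' _ _ (riemannLiouvilleKernel_ne_top a t),
          lintegral_prod (fun z : V × V ↦ u z.1 * u z.2 *
            ENNReal.ofReal (heatKernel t (z.1 - z.2))) (u_meas.mul (by fun_prop))]
    _ = ∫⁻ z : V × V, (∫⁻ t, riemannLiouvilleKernel a t *
          (u z.1 * u z.2 * ENNReal.ofReal (heatKernel t (z.1 - z.2)))) ∂(volume.prod volume) :=
        lintegral_lintegral_swap joint_meas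
    _ = ∫⁻ z : V × V, u z.1 * u z.2 * rieszKernel a (z.1 - z.2) ∂(volume.prod volume) := by
        congr with z
        simp_rw [mul_left_comm (riemannLiouvilleKernel a _)]
        rw [lintegral_const_mul _ (by fun_prop), rieszKernel]
    _ = ∫⁻ x, ∫⁻ y, u x * u y * rieszKernel a (x - y) :=
        lintegral_prod _ (u_meas.mul (by fun_prop))

end RieszKernel

section SchurTest

lemma two_mul_mul_le_sq_div_mul_add {v w : ℝ≥0∞} (hv0 : v ≠ 0) (hv : v ≠ ∞) (hw0 : w ≠ 0)
    (hw : w ≠ ∞) (a b : ℝ≥0∞) : 2 * (a * b) ≤ a ^ 2 / v * w + b ^ 2 / w * v := by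
  rcases eq_or_ne a ∞ with rfl | ha
  · simp [ENNReal.top_div_of_ne_top hv, ENNReal.top_mul hw0]
  rcases eq_or_ne b ∞ with rfl | hb
  · simp [ENNReal.top_div_of_ne_top hw, ENNReal.top_mul hv0]
  lift v to NNReal using hv
  lift w to NNReal using hw
  lift a to NNReal using ha
  lift b to NNReal using hb
  have hv0 : v ≠ 0 := by exact_mod_cast hv0
  have hw0 : w ≠ 0 := by exact_mod_cast hw0
  norm_cast
  have : (0 : ℝ) < v := by positivity
  have : (0 : ℝ) < w := by positivity
  have sq_nonneg_div : (0 : ℝ) ≤ (a * w - b * v) ^ 2 / (v * w) := by positivity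
  rw [← NNReal.coe_le_coe, ← sub_nonneg]
  push_cast
  convert sq_nonneg_div using 1
  field_simp
  ring

variable {X : Type*} [MeasurableSpace X] {μ : Measure X} [SFinite μ]

lemma lintegral_lintegral_mul_mul_le_of_symm {k : X → X → ℝ≥0∞} {u w : X → ℝ≥0∞}
    (hk : Measurable (uncurry k)) (k_symm : ∀ x y, k x y = k y x) (hu : AEMeasurable u μ)
    (hw : Measurable w) (hw0 : ∀ᵐ x ∂μ, w x ≠ 0) (hw_top : ∀ᵐ x ∂μ, w x ≠ ∞) :
    ∫⁻ x, ∫⁻ y, u x * u y * k x y ∂μ ∂μ ≤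
      ∫⁻ x, u x ^ 2 / w x * ∫⁻ y, k x y * w y ∂μ ∂μ := by
  let E : X → X → ℝ≥0∞ := fun x y ↦ u x ^ 2 / w x * (k x y * w y)
  have E_meas : AEMeasurable (uncurry E) (μ.prod μ) := by
    refine AEMeasurable.mul ?_ (by fun_prop)
    exact ((hu.pow_const 2).div hw.aemeasurable).comp_fst
  have swap_E : ∫⁻ x, ∫⁻ y, E y x ∂μ ∂μ = ∫⁻ x, ∫⁻ y, E x y ∂μ ∂μ :=
    (lintegral_lintegral_swap E_meas).symm
  have pointwise : ∀ᵐ x ∂μ, ∀ᵐ y ∂μ, 2 * (u x * u y * k x y) ≤ E x y + E y x := by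
    filter_upwards [hw0, hw_top] with x hx0 hx
    filter_upwards [hw0, hw_top] with y hy0 hy
    calc 2 * (u x * u y * k x y) = 2 * (u x * u y) * k x y := by ring
      _ ≤ (u x ^ 2 / w x * w y + u y ^ 2 / w y * w x) * k x y := by
          gcongr
          exact two_mul_mul_le_sq_div_mul_add hx0 hx hy0 hy _ _
      _ = E x y + E y x := by
          simp only [E, k_symm y x]
          ring
  have doubled : 2 * ∫⁻ x, ∫⁻ y, u x * u y * k x y ∂μ ∂μ ≤ 2 * ∫⁻ x, ∫⁻ y, E x y ∂μ ∂μ := by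
    calc 2 * ∫⁻ x, ∫⁻ y, u x * u y * k x y ∂μ ∂μ
        = ∫⁻ x, ∫⁻ y, 2 * (u x * u y * k x y) ∂μ ∂μ := by
          simp_rw [lintegral_const_mul' _ _ ENNReal.ofNat_ne_top]
      _ ≤ ∫⁻ x, ∫⁻ y, E x y + E y x ∂μ ∂μ :=
          lintegral_mono_ae (pointwise.mono fun x hx ↦ lintegral_mono_ae hx)
      _ = ∫⁻ x, (∫⁻ y, E x y ∂μ) + ∫⁻ y, E y x ∂μ ∂μ :=
          lintegral_congr fun x ↦ lintegral_add_left (by fun_prop) _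
      _ = 2 * ∫⁻ x, ∫⁻ y, E x y ∂μ ∂μ := by
          rw [lintegral_add_left' E_meas.lintegral_prod_right, swap_E, two_mul]
  calc ∫⁻ x, ∫⁻ y, u x * u y * k x y ∂μ ∂μ ≤ ∫⁻ x, ∫⁻ y, E x y ∂μ ∂μ :=
        (ENNReal.mul_le_mul_iff_right two_ne_zero ENNReal.ofNat_ne_top).1 doubled
    _ = ∫⁻ x, u x ^ 2 / w x * ∫⁻ y, k x y * w y ∂μ ∂μ := by
        refine lintegral_congr fun x ↦ lintegral_const_mul _ ?_
        fun_prop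

end SchurTest

section Fourier

lemma enorm_inner_le {𝕜 F : Type*} [RCLike 𝕜] [SeminormedAddCommGroup F] [InnerProductSpace 𝕜 F]
    (x y : F) : ‖⟪x, y⟫_𝕜‖ₑ ≤ ‖x‖ₑ * ‖y‖ₑ :=
  ENNReal.coe_le_coe.2 (nnnorm_inner_le_nnnorm x y)

variable {V E : Type*} [NormedAddCommGroup V] [InnerProductSpace ℝ V] [FiniteDimensional ℝ V]
  [MeasurableSpace V] [BorelSpace V] [NormedAddCommGroup E]

lemma continuous_fourier_of_integrable [NormedSpace ℂ E] {g : V → E} (hg : Integrable g) :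
    Continuous (𝓕 g) :=
  VectorFourier.fourierIntegral_continuous Real.continuous_fourierChar continuous_inner hg

lemma norm_fourier_le_integral_norm [NormedSpace ℂ E] (g : V → E) (ξ : V) :
    ‖𝓕 g ξ‖ ≤ ∫ x, ‖g x‖ :=
  VectorFourier.norm_fourierIntegral_le_integral_norm ..

lemma integrable_gaussian_smul_fourier [NormedSpace ℂ E] {t : ℝ} (ht : 0 < t) {g : V → E}
    (hg : Integrable g) : Integrable fun ξ : V ↦ exp (-(π * ‖ξ‖ ^ 2 * t)) • 𝓕 g ξ := by
  have gaussian_int : Integrable fun ξ : V ↦ exp (-(π * ‖ξ‖ ^ 2 * t)) := by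
    refine .of_integral_ne_zero ?_
    simp_rw [mul_right_comm π, ← neg_mul (π * t)]
    rw [GaussianFourier.integral_rexp_neg_mul_sq_norm (by positivity)]
    positivity
  exact gaussian_int.smul_bdd _ (continuous_fourier_of_integrable hg).aestronglyMeasurable
    (.of_forall (norm_fourier_le_integral_norm g))

lemma fourierInv_gaussian_smul_fourier [NormedSpace ℂ E] [CompleteSpace E] {t : ℝ} (ht : 0 < t)
    {g : V → E} (hg : Integrable g) (x : V) :
    𝓕⁻ (fun ξ ↦ exp (-(π * ‖ξ‖ ^ 2 * t)) • 𝓕 g ξ) x = ∫ y, heatKernel t (x - y) • g y := by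
  have hπt : 0 < (π * t : ℂ).re := by
    rw [← Complex.ofReal_mul, Complex.ofReal_re]
    positivity
  set γ : V → ℂ := fun ξ ↦ Complex.exp (-(π * t : ℂ) * ‖ξ‖ ^ 2 + 2 * π * Complex.I * ⟪x, ξ⟫_ℝ)
  have γ_int : Integrable γ := GaussianFourier.integrable_cexp_neg_mul_sq_norm_add hπt _ _
  have fourier_γ : ∀ y, 𝓕 γ y = heatKernel t (x - y) := by
    intro y
    have hπ : (π / (π * t) : ℂ) = (t⁻¹ : ℝ) := by
      push_cast
      field_simp
    rw [fourier_gaussian_innerProductSpace' hπt, heatKernel, rpow_neg ht.le, ← inv_rpow ht.le, hπ,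
      Complex.ofReal_mul, Complex.ofReal_cpow (by positivity), Complex.ofReal_exp]
    push_cast
    congr 2
    field_simp
  calc 𝓕⁻ (fun ξ ↦ exp (-(π * ‖ξ‖ ^ 2 * t)) • 𝓕 g ξ) x
      = ∫ ξ, γ ξ • 𝓕 g ξ := by
        rw [Real.fourierInv_eq']
        congr with ξ
        rw [← Complex.coe_smul, smul_smul, Complex.ofReal_exp, ← Complex.exp_add, real_inner_comm]
        congr 2
        push_cast
        ring
    _ = ∫ y, 𝓕 γ y • g y := by
        simpa using! (VectorFourier.integral_fourierIntegral_smul_eq_flip (L := innerₗ V)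
          Real.continuous_fourierChar continuous_inner γ_int hg).symm
    _ = ∫ y, heatKernel t (x - y) • g y := by
        simp_rw [fourier_γ, Complex.coe_smul]

lemma enorm_fourierInv_gaussian_smul_fourier_le [NormedSpace ℂ E] [CompleteSpace E] {t : ℝ}
    (ht : 0 < t) {g : V → E} (hg : Integrable g) (x : V) :
    ‖𝓕⁻ (fun ξ ↦ exp (-(π * ‖ξ‖ ^ 2 * t)) • 𝓕 g ξ) x‖ₑ ≤
      ∫⁻ y, ‖g y‖ₑ * ENNReal.ofReal (heatKernel t (x - y)) := by
  rw [fourierInv_gaussian_smul_fourier ht hg]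
  refine (enorm_integral_le_lintegral_enorm _).trans_eq (lintegral_congr fun y ↦ ?_)
  rw [enorm_smul, enorm_of_nonneg (heatKernel_nonneg ht.le _), mul_comm]

variable [InnerProductSpace ℂ E] [CompleteSpace E]

lemma integral_inner_fourier_eq_integral_inner_fourierInv {f g : V → E} (hf : Integrable f)
    (hg : Integrable g) : ∫ ξ, ⟪𝓕 f ξ, g ξ⟫_ℂ = ∫ x, ⟪f x, 𝓕⁻ g x⟫_ℂ := by
  simpa using! VectorFourier.integral_sesq_fourierIntegral_eq_neg_flip (innerSL ℂ)
    (L := innerₗ V) Real.continuous_fourierChar continuous_inner hf hg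

lemma lintegral_gaussian_mul_enorm_fourier_sq_le {t : ℝ} (ht : 0 < t) {g : V → E}
    (hg : Integrable g) :
    ∫⁻ ξ, ENNReal.ofReal (exp (-(π * ‖ξ‖ ^ 2 * t))) * ‖𝓕 g ξ‖ₑ ^ 2 ≤
      ∫⁻ x, ∫⁻ y, ‖g x‖ₑ * ‖g y‖ₑ * ENNReal.ofReal (heatKernel t (x - y)) := by
  have fourier_bdd : ∀ᵐ ξ : V, ‖𝓕 g ξ‖ ≤ ∫ x, ‖g x‖ := .of_forall (norm_fourier_le_integral_norm g)
  set v : V → E := fun ξ ↦ exp (-(π * ‖ξ‖ ^ 2 * t)) • 𝓕 g ξ with hv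
  have v_int : Integrable v := integrable_gaussian_smul_fourier ht hg
  have inner_v : ∀ ξ, ⟪𝓕 g ξ, v ξ⟫_ℂ = (exp (-(π * ‖ξ‖ ^ 2 * t)) * ‖𝓕 g ξ‖ ^ 2 : ℝ) := by
    intro ξ
    simp only [hv]
    rw [← Complex.coe_smul, inner_smul_right, inner_self_eq_norm_sq_to_K]
    push_cast
    rfl
  have inner_v_int : Integrable fun ξ ↦ exp (-(π * ‖ξ‖ ^ 2 * t)) * ‖𝓕 g ξ‖ ^ 2 := by
    refine (v_int.norm.mul_bdd (continuous_fourier_of_integrable hg).norm.aestronglyMeasurable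
      (by simpa using fourier_bdd)).congr (.of_forall fun ξ ↦ ?_)
    simp only [hv, norm_smul, norm_eq_abs, abs_exp]
    ring
  calc ∫⁻ ξ, ENNReal.ofReal (exp (-(π * ‖ξ‖ ^ 2 * t))) * ‖𝓕 g ξ‖ₑ ^ 2
      = ‖∫ ξ, ⟪𝓕 g ξ, v ξ⟫_ℂ‖ₑ := by
        simp_rw [inner_v]
        rw [integral_complex_ofReal, ← ofReal_norm, Complex.norm_real,
          norm_of_nonneg (integral_nonneg fun ξ ↦ by positivity),
          ofReal_integral_eq_lintegral_ofReal inner_v_int (.of_forall fun ξ ↦ by positivity)]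
        simp_rw [ENNReal.ofReal_mul (exp_nonneg _), ENNReal.ofReal_pow (norm_nonneg _),
          ofReal_norm]
    _ = ‖∫ x, ⟪g x, 𝓕⁻ v x⟫_ℂ‖ₑ := by
        rw [integral_inner_fourier_eq_integral_inner_fourierInv hg v_int]
    _ ≤ ∫⁻ x, ‖g x‖ₑ * ‖𝓕⁻ v x‖ₑ :=
        (enorm_integral_le_lintegral_enorm _).trans
          (lintegral_mono fun x ↦ enorm_inner_le (g x) (𝓕⁻ v x))
    _ ≤ ∫⁻ x, ‖g x‖ₑ * ∫⁻ y, ‖g y‖ₑ * ENNReal.ofReal (heatKernel t (x - y)) := by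
        gcongr with x
        exact enorm_fourierInv_gaussian_smul_fourier_le ht hg x
    _ = ∫⁻ x, ∫⁻ y, ‖g x‖ₑ * ‖g y‖ₑ * ENNReal.ofReal (heatKernel t (x - y)) := by
        simp_rw [← lintegral_const_mul' _ _ enorm_ne_top, mul_assoc]

end Fourier

section Pitt

variable {V E : Type*} [NormedAddCommGroup V] [InnerProductSpace ℝ V] [FiniteDimensional ℝ V]
  [MeasurableSpace V] [BorelSpace V]

lemma lintegral_lintegral_mul_rieszKernel_sub_le {a b : ℝ} (ha : 0 < a) (hb : 0 < b)
    (hab : a + 2 * b = Module.finrank ℝ V / 2) {u : V → ℝ≥0∞} (hu : AEMeasurable u) :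
    ∫⁻ x, ∫⁻ y, u x * u y * rieszKernel a (x - y) ≤
      ENNReal.ofReal ((Gamma b / Gamma (a + b)) ^ 2) *
        ∫⁻ x, ENNReal.ofReal ((π * ‖x‖ ^ 2) ^ a) * u x ^ 2 := by
  have : Nontrivial V := Module.nontrivial_of_finrank_pos (R := ℝ) <| by
    rify
    linarith
  have weight_ae : ∀ᵐ x : V, rieszKernel b x ≠ 0 ∧ rieszKernel b x ≠ ∞ :=
    (volume.ae_ne 0).mono fun x ↦ rieszKernel_ne_zero_and_ne_top hb (by linarith)
  calc ∫⁻ x, ∫⁻ y, u x * u y * rieszKernel a (x - y)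
      ≤ ∫⁻ x, u x ^ 2 / rieszKernel b x * ∫⁻ y, rieszKernel a (x - y) * rieszKernel b y :=
        lintegral_lintegral_mul_mul_le_of_symm (k := fun x y ↦ rieszKernel a (x - y))
          (by fun_prop) (fun x y ↦ by rw [← rieszKernel_neg, neg_sub]) hu (by fun_prop)
          (weight_ae.mono fun _ ↦ And.left) (weight_ae.mono fun _ ↦ And.right)
    _ = ∫⁻ x, ENNReal.ofReal ((Gamma b / Gamma (a + b)) ^ 2) *
          (ENNReal.ofReal ((π * ‖x‖ ^ 2) ^ a) * u x ^ 2) := by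
        refine lintegral_congr_ae ((volume.ae_ne 0).mono fun x hx ↦ ?_)
        simp only
        rw [lintegral_rieszKernel_sub_mul_rieszKernel ha hb, ← mul_assoc,
          ← ENNReal.ofReal_mul (by positivity), ← rieszKernel_add_div_rieszKernel ha hb hab hx]
        simp only [div_eq_mul_inv]
        ring
    _ = _ := lintegral_const_mul' _ _ ENNReal.ofReal_ne_top

variable [NormedAddCommGroup E] [InnerProductSpace ℂ E] [CompleteSpace E] {g : V → E}

lemma lintegral_gaussian_mul_enorm_fourier_sq_le_lintegral_enorm_sq {t : ℝ} (ht : 0 < t)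
    (hg : Integrable g) :
    ∫⁻ ξ, ENNReal.ofReal (exp (-(π * ‖ξ‖ ^ 2 * t))) * ‖𝓕 g ξ‖ₑ ^ 2 ≤ ∫⁻ x, ‖g x‖ₑ ^ 2 := by
  refine (lintegral_gaussian_mul_enorm_fourier_sq_le ht hg).trans <|
    (lintegral_lintegral_mul_mul_le_of_symm (w := 1)
      (k := fun x y ↦ ENNReal.ofReal (heatKernel t (x - y))) (by fun_prop)
      (fun x y ↦ by rw [← heatKernel_neg, neg_sub]) hg.1.enorm measurable_one
      (by simp) (by simp)).trans_eq (lintegral_congr fun x ↦ ?_)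
  simp only [Pi.one_apply, div_one, mul_one]
  rw [lintegral_sub_left_eq_self fun y ↦ ENNReal.ofReal (heatKernel t y), lintegral_heatKernel ht,
    mul_one]

lemma lintegral_enorm_fourier_sq_le (hg : Integrable g) :
    ∫⁻ ξ, ‖𝓕 g ξ‖ₑ ^ 2 ≤ ∫⁻ x, ‖g x‖ₑ ^ 2 := by
  have tendsto_one : ∀ ξ, Tendsto
      (fun t : ℝ ↦ ENNReal.ofReal (exp (-(π * ‖ξ‖ ^ 2 * t))) * ‖𝓕 g ξ‖ₑ ^ 2) (𝓝[>] 0)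
      (𝓝 (‖𝓕 g ξ‖ₑ ^ 2)) := by
    intro ξ
    refine Tendsto.mono_left ?_ nhdsWithin_le_nhds
    have : Continuous fun t : ℝ ↦ ENNReal.ofReal (exp (-(π * ‖ξ‖ ^ 2 * t))) :=
      ENNReal.continuous_ofReal.comp (by fun_prop)
    simpa using ENNReal.Tendsto.mul_const (this.tendsto 0) (Or.inr (by finiteness))
  calc ∫⁻ ξ, ‖𝓕 g ξ‖ₑ ^ 2
      = ∫⁻ ξ, liminf (fun t : ℝ ↦ ENNReal.ofReal (exp (-(π * ‖ξ‖ ^ 2 * t))) * ‖𝓕 g ξ‖ₑ ^ 2)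
          (𝓝[>] 0) := lintegral_congr fun ξ ↦ (tendsto_one ξ).liminf_eq.symm
    _ ≤ liminf (fun t : ℝ ↦ ∫⁻ ξ, ENNReal.ofReal (exp (-(π * ‖ξ‖ ^ 2 * t))) * ‖𝓕 g ξ‖ₑ ^ 2)
          (𝓝[>] 0) := by
        have := (continuous_fourier_of_integrable hg).stronglyMeasurable
        exact lintegral_liminf_le fun t ↦ by fun_prop
    _ ≤ ∫⁻ x, ‖g x‖ₑ ^ 2 := by
        refine liminf_le_of_frequently_le' (Eventually.frequently ?_)
        filter_upwards [self_mem_nhdsWithin] with t ht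
        exact lintegral_gaussian_mul_enorm_fourier_sq_le_lintegral_enorm_sq ht hg

lemma lintegral_rpow_neg_mul_enorm_fourier_sq_le_lintegral_rieszKernel {a : ℝ} (ha : 0 < a)
    (hg : Integrable g) :
    ∫⁻ ξ, ENNReal.ofReal ((π * ‖ξ‖ ^ 2) ^ (-a)) * ‖𝓕 g ξ‖ₑ ^ 2 ≤
      ∫⁻ x, ∫⁻ y, ‖g x‖ₑ * ‖g y‖ₑ * rieszKernel a (x - y) := by
  have laplace : ∀ ξ : V, ENNReal.ofReal ((π * ‖ξ‖ ^ 2) ^ (-a)) ≤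
      ∫⁻ t, riemannLiouvilleKernel a t * ENNReal.ofReal (exp (-(π * ‖ξ‖ ^ 2 * t))) := by
    intro ξ
    rcases eq_or_ne ξ 0 with rfl | hξ
    · simp [zero_rpow (neg_ne_zero.2 ha.ne')]
    · exact (lintegral_riemannLiouvilleKernel_mul_exp_neg ha (by positivity)).ge
  have fourier_meas := (continuous_fourier_of_integrable hg).stronglyMeasurable
  calc ∫⁻ ξ, ENNReal.ofReal ((π * ‖ξ‖ ^ 2) ^ (-a)) * ‖𝓕 g ξ‖ₑ ^ 2
      ≤ ∫⁻ ξ, (∫⁻ t, riemannLiouvilleKernel a t * ENNReal.ofReal (exp (-(π * ‖ξ‖ ^ 2 * t)))) *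
          ‖𝓕 g ξ‖ₑ ^ 2 := lintegral_mono fun ξ ↦ mul_le_mul_left (laplace ξ) _
    _ = ∫⁻ ξ, ∫⁻ t, riemannLiouvilleKernel a t *
          (ENNReal.ofReal (exp (-(π * ‖ξ‖ ^ 2 * t))) * ‖𝓕 g ξ‖ₑ ^ 2) := by
        simp_rw [← mul_assoc]
        exact lintegral_congr fun ξ ↦ (lintegral_mul_const _ (by fun_prop)).symm
    _ = ∫⁻ t, riemannLiouvilleKernel a t *
          ∫⁻ ξ, ENNReal.ofReal (exp (-(π * ‖ξ‖ ^ 2 * t))) * ‖𝓕 g ξ‖ₑ ^ 2 := by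
        rw [lintegral_lintegral_swap (by fun_prop)]
        exact lintegral_congr fun t ↦
          lintegral_const_mul' _ _ (riemannLiouvilleKernel_ne_top a t)
    _ ≤ ∫⁻ t, riemannLiouvilleKernel a t *
          ∫⁻ x, ∫⁻ y, ‖g x‖ₑ * ‖g y‖ₑ * ENNReal.ofReal (heatKernel t (x - y)) := by
        refine lintegral_mono fun t ↦ ?_
        rcases le_or_gt t 0 with ht | ht
        · simp [riemannLiouvilleKernel_of_nonpos ht]
        · exact mul_le_mul_right (lintegral_gaussian_mul_enorm_fourier_sq_le ht hg) _
    _ = ∫⁻ x, ∫⁻ y, ‖g x‖ₑ * ‖g y‖ₑ * rieszKernel a (x - y) :=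
        lintegral_riemannLiouvilleKernel_mul_lintegral_heatKernel_sub a hg.1.enorm

/-- The sharp constant in Pitt's inequality on a `d`-dimensional Euclidean space. -/
noncomputable def pittConst (d α : ℝ) : ℝ :=
  π ^ α * (Gamma ((d - α) / 4) / Gamma ((d + α) / 4)) ^ 2

lemma pittConst_nonneg (d α : ℝ) : 0 ≤ pittConst d α := by
  unfold pittConst
  positivity

lemma pittConst_zero {d : ℝ} (hd : 0 < d) : pittConst d 0 = 1 := by
  rw [pittConst, rpow_zero, sub_zero, add_zero, div_self (Gamma_pos_of_pos (by positivity)).ne',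
    one_pow, one_mul]

lemma lintegral_norm_rpow_neg_mul_enorm_fourier_sq_le {α : ℝ} (hα0 : 0 ≤ α)
    (hα : α < Module.finrank ℝ V) (hg : Integrable g) :
    ∫⁻ ξ, ENNReal.ofReal (‖ξ‖ ^ (-α)) * ‖𝓕 g ξ‖ₑ ^ 2 ≤
      ENNReal.ofReal (pittConst (Module.finrank ℝ V) α) *
        ∫⁻ x, ENNReal.ofReal (‖x‖ ^ α) * ‖g x‖ₑ ^ 2 := by
  rcases hα0.eq_or_lt with rfl | hα_pos
  · simpa [pittConst_zero hα] using lintegral_enorm_fourier_sq_le hg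
  have rpow_mul_norm_sq : ∀ (x : V) (s : ℝ), (π * ‖x‖ ^ 2) ^ s = π ^ s * ‖x‖ ^ (2 * s) := by
    intro x s
    rw [mul_rpow pi_nonneg (by positivity), ← rpow_natCast_mul (norm_nonneg x), Nat.cast_ofNat]
  have stein_weiss :=
    (lintegral_rpow_neg_mul_enorm_fourier_sq_le_lintegral_rieszKernel (half_pos hα_pos) hg).trans
    (lintegral_lintegral_mul_rieszKernel_sub_le (b := (Module.finrank ℝ V - α) / 4)
      (half_pos hα_pos) (by linarith) (by ring) hg.1.enorm)
  have exponent : α / 2 + (Module.finrank ℝ V - α) / 4 = (Module.finrank ℝ V + α) / 4 := by ring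
  simp_rw [rpow_mul_norm_sq, mul_neg, mul_div_cancel₀ α two_ne_zero, exponent,
    ENNReal.ofReal_mul (rpow_nonneg pi_nonneg _), mul_assoc,
    lintegral_const_mul' _ _ ENNReal.ofReal_ne_top] at stein_weiss
  calc ∫⁻ ξ, ENNReal.ofReal (‖ξ‖ ^ (-α)) * ‖𝓕 g ξ‖ₑ ^ 2
      = ENNReal.ofReal (π ^ (α / 2)) * (ENNReal.ofReal (π ^ (-(α / 2))) *
          ∫⁻ ξ, ENNReal.ofReal (‖ξ‖ ^ (-α)) * ‖𝓕 g ξ‖ₑ ^ 2) := by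
        rw [← mul_assoc, ← ENNReal.ofReal_mul (by positivity), ← rpow_add pi_pos, add_neg_cancel,
          rpow_zero, ENNReal.ofReal_one, one_mul]
    _ ≤ ENNReal.ofReal (π ^ (α / 2)) * _ := mul_le_mul_right stein_weiss _
    _ = _ := by
        rw [← mul_assoc, ← mul_assoc, ← ENNReal.ofReal_mul (by positivity),
          ← ENNReal.ofReal_mul (by positivity), pittConst]
        congr 2
        rw [mul_right_comm, ← rpow_add pi_pos, add_halves]

lemma integral_norm_rpow_neg_mul_norm_fourier_sq_le {α : ℝ} (hα0 : 0 ≤ α)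
    (hα : α < Module.finrank ℝ V) (hg : Integrable g)
    (hgα : Integrable fun x ↦ ‖x‖ ^ α * ‖g x‖ ^ 2) :
    ∫ ξ, ‖ξ‖ ^ (-α) * ‖𝓕 g ξ‖ ^ 2 ≤
      pittConst (Module.finrank ℝ V) α * ∫ x, ‖x‖ ^ α * ‖g x‖ ^ 2 := by
  have ofReal_weight : ∀ (s : ℝ) (x : V) (z : E),
      ENNReal.ofReal (‖x‖ ^ s) * ‖z‖ₑ ^ 2 = ENNReal.ofReal (‖x‖ ^ s * ‖z‖ ^ 2) := by
    intro s x z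
    rw [ENNReal.ofReal_mul (by positivity), ENNReal.ofReal_pow (norm_nonneg z), ofReal_norm]
  have pitt := lintegral_norm_rpow_neg_mul_enorm_fourier_sq_le hα0 hα hg
  simp_rw [ofReal_weight] at pitt
  rw [← ofReal_integral_eq_lintegral_ofReal hgα (.of_forall fun x ↦ by positivity),
    ← ENNReal.ofReal_mul (pittConst_nonneg _ _)] at pitt
  have lhs_meas : Measurable fun ξ ↦ ‖ξ‖ ^ (-α) * ‖𝓕 g ξ‖ ^ 2 :=
    .mul (by fun_prop) ((continuous_fourier_of_integrable hg).norm.measurable.pow_const 2)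
  rw [integral_eq_lintegral_of_nonneg_ae (.of_forall fun ξ ↦ by positivity)
    lhs_meas.aestronglyMeasurable]
  exact ENNReal.toReal_le_of_le_ofReal
    (mul_nonneg (pittConst_nonneg _ _) (integral_nonneg fun x ↦ by positivity)) pitt

end Pitt

section Schwartz

variable {V E : Type*} [NormedAddCommGroup V] [NormedSpace ℝ V] [NormedAddCommGroup E]
  [NormedSpace ℝ E] [MeasurableSpace V] [BorelSpace V] [SecondCountableTopology V]

lemma integrable_norm_rpow_mul_norm_schwartzMap_sq (f : 𝓢(V, E)) (μ : Measure V)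
    [μ.HasTemperateGrowth] {α : ℝ} (hα : 0 ≤ α) : Integrable (fun x ↦ ‖x‖ ^ α * ‖f x‖ ^ 2) μ := by
  obtain ⟨M, -, f_bdd⟩ := f.decay 0 0
  have rpow_le_one_add_pow : ∀ x : V, ‖x‖ ^ α ≤ 1 + ‖x‖ ^ ⌈α⌉₊ := by
    intro x
    rcases le_total ‖x‖ 1 with hx | hx
    · exact (rpow_le_one (norm_nonneg x) hx hα).trans (le_add_of_nonneg_right (by positivity))
    · rw [← rpow_natCast]
      exact (rpow_le_rpow_of_exponent_le hx (Nat.le_ceil α)).trans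
        (le_add_of_nonneg_left zero_le_one)
  have weighted_int : Integrable (fun x ↦ ‖x‖ ^ α * ‖f x‖) μ := by
    refine ((f.integrable_pow_mul μ 0).add (f.integrable_pow_mul μ ⌈α⌉₊)).mono' ?_
      (.of_forall fun x ↦ ?_)
    · exact AEStronglyMeasurable.mul (Measurable.aestronglyMeasurable (by fun_prop))
        f.continuous.norm.aestronglyMeasurable
    · rw [norm_of_nonneg (by positivity), Pi.add_apply, pow_zero, ← add_mul]
      exact mul_le_mul_of_nonneg_right (rpow_le_one_add_pow x) (norm_nonneg _)
  refine (weighted_int.mul_bdd (c := M) f.continuous.norm.aestronglyMeasurable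
    (.of_forall fun x ↦ ?_)).congr (.of_forall fun x ↦ ?_)
  · simpa using f_bdd x
  · simp only
    ring

end Schwartz

section SpecialAffine

/-- The modulation of `f` by the quadratic phase of the SAFT kernel in the space variable, so that
the SAFT of `f` is, up to a phase and a dilation, the Fourier transform of `chirp A B p f`. -/
noncomputable def chirp (A B p : ℝ) (f : ℝ → ℂ) (x : ℝ) : ℂ :=
  f x * Complex.exp (((A * x ^ 2 + 2 * x * p) / (2 * B) : ℝ) * Complex.I)

lemma norm_chirp (A B p : ℝ) (f : ℝ → ℂ) (x : ℝ) : ‖chirp A B p f x‖ = ‖f x‖ := by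
  rw [chirp, norm_mul, Complex.norm_exp_ofReal_mul_I, mul_one]

lemma integrable_chirp (A B p : ℝ) {f : ℝ → ℂ} (hf : Integrable f) :
    Integrable (chirp A B p f) := by
  refine hf.mul_bdd (c := 1) (Continuous.aestronglyMeasurable (by fun_prop))
    (.of_forall fun x ↦ ?_)
  rw [Complex.norm_exp_ofReal_mul_I]

variable {B : ℝ}

lemma SAFT_eq (A D p q : ℝ) (hB : B ≠ 0) (f : ℝ → ℂ) (ω : ℝ) :
    SAFT A B D p q f ω = (√(2 * π * |B|) : ℂ)⁻¹ *
      (Complex.exp (((D * ω ^ 2 - 2 * ω * (D * p - B * q)) / (2 * B) : ℝ) * Complex.I) *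
        𝓕 (chirp A B p f) (ω / (2 * π * B))) := by
  have hB' : (B : ℂ) ≠ 0 := Complex.ofReal_ne_zero.2 hB
  have hπ : (π : ℂ) ≠ 0 := Complex.ofReal_ne_zero.2 pi_ne_zero
  rw [SAFT, fourier_real_eq_integral_exp_smul]
  congr 1
  rw [← integral_const_mul]
  congr with x
  simp only [chirp, smul_eq_mul]
  rw [mul_left_comm (Complex.exp _) (f x), mul_left_comm (Complex.exp _) (f x),
    ← Complex.exp_add, ← Complex.exp_add]
  congr 2
  push_cast
  field_simp
  ring

lemma norm_SAFT_sq (A D p q : ℝ) (hB : B ≠ 0) (f : ℝ → ℂ) (ω : ℝ) :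
    ‖SAFT A B D p q f ω‖ ^ 2 =
      |2 * π * B|⁻¹ * ‖𝓕 (chirp A B p f) (ω / (2 * π * B))‖ ^ 2 := by
  rw [SAFT_eq A D p q hB, norm_mul, norm_mul, Complex.norm_exp_ofReal_mul_I, one_mul, mul_pow,
    norm_inv, Complex.norm_real, norm_of_nonneg (sqrt_nonneg _), inv_pow, sq_sqrt (by positivity),
    abs_mul, abs_of_pos two_pi_pos]

lemma integral_abs_rpow_neg_mul_norm_SAFT_sq (A D p q α : ℝ) (hB : B ≠ 0) (f : ℝ → ℂ) :
    ∫ ω, |ω| ^ (-α) * ‖SAFT A B D p q f ω‖ ^ 2 =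
      |2 * π * B| ^ (-α) * ∫ ξ, |ξ| ^ (-α) * ‖𝓕 (chirp A B p f) ξ‖ ^ 2 := by
  set c := 2 * π * B
  have hc : c ≠ 0 := mul_ne_zero two_pi_pos.ne' hB
  have dilate : ∀ ω, |ω| ^ (-α) * ‖SAFT A B D p q f ω‖ ^ 2 =
      |c| ^ (-α) * |c|⁻¹ * (|ω / c| ^ (-α) * ‖𝓕 (chirp A B p f) (ω / c)‖ ^ 2) := by
    intro ω
    rw [norm_SAFT_sq A D p q hB, mul_mul_mul_comm, ← mul_rpow (abs_nonneg c) (abs_nonneg _),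
      ← abs_mul, mul_div_cancel₀ ω hc]
  simp_rw [dilate]
  rw [integral_const_mul,
    Measure.integral_comp_div (fun ξ ↦ |ξ| ^ (-α) * ‖𝓕 (chirp A B p f) ξ‖ ^ 2), smul_eq_mul,
    mul_assoc, inv_mul_cancel_left₀ (abs_ne_zero.2 hc)]

theorem saft_pitt_general (A D p q : ℝ) (hB : B ≠ 0) {α : ℝ} (hα0 : 0 ≤ α) (hα1 : α < 1)
    {f : ℝ → ℂ} (hf : Integrable f) (hfα : Integrable fun x ↦ |x| ^ α * ‖f x‖ ^ 2) :
    |B| ^ α * ∫ ω, |ω| ^ (-α) * ‖SAFT A B D p q f ω‖ ^ 2 ≤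
      (2 * π) ^ (-α) * (pittConst 1 α * ∫ x, |x| ^ α * ‖f x‖ ^ 2) := by
  have dilation : |B| ^ α * |2 * π * B| ^ (-α) = (2 * π) ^ (-α) := by
    rw [abs_mul, abs_of_pos two_pi_pos, mul_rpow two_pi_pos.le (abs_nonneg B), mul_left_comm,
      ← rpow_add (abs_pos.2 hB), add_neg_cancel, rpow_zero, mul_one]
  have pitt := integral_norm_rpow_neg_mul_norm_fourier_sq_le (V := ℝ) hα0 (by simpa using hα1)
    (integrable_chirp A B p hf) (by simpa only [norm_chirp, norm_eq_abs] using hfα)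
  simp only [norm_chirp, norm_eq_abs, Module.finrank_self, Nat.cast_one] at pitt
  rw [integral_abs_rpow_neg_mul_norm_SAFT_sq A D p q α hB, ← mul_assoc, dilation]
  gcongr

end SpecialAffine

/-- Pitt's inequality for the special affine Fourier transform, for Schwartz functions. -/
theorem saft_pitt (A B C D p q : ℝ) (hΛ : A * D - B * C = 1) (hB : B ≠ 0)
    (α : ℝ) (hα0 : 0 ≤ α) (hα1 : α < 1)
    (f : SchwartzMap ℝ ℂ) :
    |B| ^ α * ∫ ω : ℝ, |ω| ^ (-α) * ‖SAFT A B D p q (fun x => f x) ω‖ ^ 2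
      ≤ (Real.pi ^ α *
          (Real.Gamma ((1 - α) / 4) / Real.Gamma ((1 + α) / 4)) ^ 2) *
        ∫ x : ℝ, |x| ^ α * ‖f x‖ ^ 2 :=
  (saft_pitt_general A D p q hB hα0 hα1 f.integrable
    (integrable_norm_rpow_mul_norm_schwartzMap_sq f volume hα0)).trans <| mul_le_of_le_one_left
      (mul_nonneg (pittConst_nonneg 1 α) (by positivity)) <|
    rpow_le_one_of_one_le_of_nonpos (by linarith [pi_gt_three]) (by simpa)
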